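/- Let M be a finitely generated torsion module over R = ℤ[t,t^{-1}], and let M' = ⊕_{j=0}^k R/(Δ^j(M)/Δ^{j+1}(M)), where Δ^j(M) = 1 for j > k. Then Δ^j(M') = Δ^j(M) for all j ≥ 0. -/

import Mathlib

/-- `Δ^j`: the gcd of all `(b-j)×(b-j)` minors of the `b × b'` presentation
matrix (over a UFD/GCD domain `R`, standing for `ℤ[t,t⁻¹]`). -/
noncomputable def deltaGCD {R : Type*} [CommRing R] [IsDomain R] [NormalizedGCDMonoid R]
    {b b' : ℕ} (A : Matrix (Fin b) (Fin b') R) (j : ℕ) : R :=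
  Finset.univ.gcd
    (fun p : (Fin (b - j) ↪ Fin b) × (Fin (b - j) ↪ Fin b') =>
      (A.submatrix (⇑p.1) (⇑p.2)).det)

/-!
The elementary divisor argument is not available over a GCD domain, so one works with minors.
Write `d_k` for the gcd of the `k × k` minors of a matrix. The key point is
`d_{s+1}² ∣ d_{s+2} d_s`. For a square matrix of size `s + 2`, Jacobi's complementary minor identity
gives this with the leading minors of sizes `s + 2` and `s` on the right. Multiplying the given
matrix on both sides by matrices of sufficiently independent monomials produces such a square matrix
over `R[X]`, whose two leading minors have contents `d_{s+2}` and `d_s`, and Gauss's lemma yields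
the claim. It says that each quotient `q_j = Δ^j / Δ^{j+1}` is divisible by the next one, whence the
smallest products among the minors of `diag(q_0, …, q_k)` are the tails `∏_{i ≥ j} q_i`, which
telescope to `Δ^j`.
-/

open Matrix Polynomial

section Determinants

variable {S ι m n : Type*} [CommRing S] [Fintype ι] [DecidableEq ι] [Fintype m] [Fintype n]

theorem det_mul_eq_sum_prod_mul_det_submatrix (U : Matrix ι m S) (B : Matrix m ι S) :
    (U * B).det = ∑ f : ι → m, (∏ a, U a (f a)) * (B.submatrix f id).det := by
  have rows : U * B = fun a => ∑ i, U a i • B i := by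
    ext a c
    simp [Matrix.mul_apply, Finset.sum_apply]
  rw [rows]
  refine (detRowAlternating.toMultilinearMap.map_sum fun a i => U a i • B i).trans ?_
  exact Finset.sum_congr rfl fun f _ =>
    detRowAlternating.toMultilinearMap.map_smul_univ (fun a => U a (f a)) fun a => B (f a)

theorem det_mul_mul_eq_sum_sum (U : Matrix ι m S) (A : Matrix m n S) (V : Matrix n ι S) :
    (U * A * V).det =
      ∑ f : ι → m, ∑ g : ι → n, (∏ a, U a (f a)) * (∏ a, V (g a) a) * (A.submatrix f g).det := by
  rw [Matrix.mul_assoc, det_mul_eq_sum_prod_mul_det_submatrix]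
  refine Finset.sum_congr rfl fun f _ => ?_
  have columns : ((A * V).submatrix f id).det = (Vᵀ * (A.submatrix f id)ᵀ).det := by
    rw [← Matrix.transpose_mul, det_transpose]
    rfl
  rw [columns, det_mul_eq_sum_prod_mul_det_submatrix, Finset.mul_sum]
  refine Finset.sum_congr rfl fun g _ => ?_
  rw [mul_assoc, ← det_transpose (A.submatrix f g)]
  rfl

theorem pow_card_dvd_det {d : S} {N : Matrix ι ι S} (hd : ∀ i j, d ∣ N i j) :
    d ^ Fintype.card ι ∣ N.det := by
  choose K hK using hd
  have hN : N = d • Matrix.of K := Matrix.ext hK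
  rw [hN, det_smul]
  exact dvd_mul_right _ _

variable [DecidableEq m] [DecidableEq n]

/-- **Jacobi's complementary minor identity**, before cancelling a factor `M.det`. -/
theorem det_mul_det_toBlocks₂₂_adjugate (M : Matrix (m ⊕ n) (m ⊕ n) S) :
    M.det * M.adjugate.toBlocks₂₂.det = M.det ^ Fintype.card n * M.toBlocks₁₁.det := by
  have mul_columns : M * fromBlocks 1 M.adjugate.toBlocks₁₂ 0 M.adjugate.toBlocks₂₂ =
      fromBlocks M.toBlocks₁₁ 0 M.toBlocks₂₁ (M.det • 1) := by
    have mul_adj := M.mul_adjugate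
    generalize M.adjugate = N, M.det = c at mul_adj ⊢
    rw [← fromBlocks_toBlocks M, ← fromBlocks_toBlocks N, fromBlocks_multiply, ← fromBlocks_one,
      fromBlocks_smul, fromBlocks_inj] at mul_adj
    obtain ⟨-, h₁₂, -, h₂₂⟩ := mul_adj
    nth_rw 1 [← fromBlocks_toBlocks M]
    rw [fromBlocks_multiply, h₁₂, h₂₂]
    simp only [Matrix.mul_one, Matrix.mul_zero, add_zero, smul_zero]
  have h := congrArg det mul_columns
  rw [det_mul, det_fromBlocks_zero₂₁, det_fromBlocks_zero₁₂, det_one, one_mul, det_smul, det_one,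
    mul_one] at h
  rw [h, mul_comm]

theorem sq_dvd_det_mul_det_submatrix_castAdd [IsDomain S] {s : ℕ}
    (M : Matrix (Fin (s + 2)) (Fin (s + 2)) S) {d : S}
    (hd : ∀ p q : Fin (s + 1) → Fin (s + 2), d ∣ (M.submatrix p q).det) :
    d ^ 2 ∣ M.det * (M.submatrix (Fin.castAdd 2) (Fin.castAdd 2)).det := by
  rcases eq_or_ne M.det 0 with h0 | h0
  · rw [h0, zero_mul]
    exact dvd_zero _
  let B := M.submatrix (finSumFinEquiv (m := s) (n := 2)) finSumFinEquiv
  have hB : B.det = M.det := det_submatrix_equiv_self _ _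
  have adj_dvd : d ^ 2 ∣ B.adjugate.toBlocks₂₂.det := by
    refine pow_card_dvd_det (ι := Fin 2) fun i j => ?_
    simp only [B, toBlocks₂₂, of_apply, adjugate_submatrix_equiv_self, submatrix_apply,
      adjugate_fin_succ_eq_det_submatrix]
    exact (hd _ _).mul_left _
  have jacobi : B.adjugate.toBlocks₂₂.det = M.det * B.toBlocks₁₁.det := by
    have h := det_mul_det_toBlocks₂₂_adjugate B
    rw [hB, Fintype.card_fin, pow_two, mul_assoc] at h
    exact mul_left_cancel₀ h0 h
  rwa [jacobi] at adj_dvd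

end Determinants

section MinorGCD

variable {R m n : Type*} [CommRing R] [NormalizedGCDMonoid R] [Fintype m] [Fintype n]

/-- The normalized gcd of the `k × k` minors of `A`, that is, `Δ^j` of the paper indexed by the
size `k` of the minors instead of their corank `j`. The empty gcd is `0`, so it vanishes when `A`
has no `k × k` minor. -/
noncomputable def minorGCD (A : Matrix m n R) (k : ℕ) : R :=
  Finset.univ.gcd fun p : (Fin k ↪ m) × (Fin k ↪ n) => (A.submatrix p.1 p.2).det

theorem normalize_minorGCD (A : Matrix m n R) (k : ℕ) :
    normalize (minorGCD A k) = minorGCD A k :=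
  Finset.normalize_gcd

theorem dvd_minorGCD {A : Matrix m n R} {k : ℕ} {d : R}
    (h : ∀ (f : Fin k ↪ m) (g : Fin k ↪ n), d ∣ (A.submatrix f g).det) : d ∣ minorGCD A k :=
  Finset.dvd_gcd fun p _ => h p.1 p.2

theorem minorGCD_dvd_det_submatrix (A : Matrix m n R) {k : ℕ} (f : Fin k → m) (g : Fin k → n) :
    minorGCD A k ∣ (A.submatrix f g).det := by
  by_cases hf : f.Injective
  · by_cases hg : g.Injective
    · exact Finset.gcd_dvd (f := fun p : (Fin k ↪ m) × (Fin k ↪ n) => (A.submatrix p.1 p.2).det)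
        (Finset.mem_univ (⟨f, hf⟩, ⟨g, hg⟩))
    · obtain ⟨i, j, hij, hne⟩ := Function.not_injective_iff.1 hg
      rw [det_zero_of_column_eq hne fun a => by simp only [submatrix_apply, hij]]
      exact dvd_zero _
  · obtain ⟨i, j, hij, hne⟩ := Function.not_injective_iff.1 hf
    rw [det_zero_of_row_eq hne (funext fun a => by simp only [submatrix_apply, hij])]
    exact dvd_zero _

theorem minorGCD_zero (A : Matrix m n R) : minorGCD A 0 = 1 := by
  have h : minorGCD A 0 ∣ 1 := by
    simpa only [det_fin_zero] using minorGCD_dvd_det_submatrix A Fin.elim0 Fin.elim0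
  rw [← normalize_minorGCD]
  exact normalize_eq_one.2 (isUnit_of_dvd_one h)

theorem minorGCD_dvd_minorGCD_succ (A : Matrix m n R) (k : ℕ) :
    minorGCD A k ∣ minorGCD A (k + 1) := by
  refine dvd_minorGCD fun f g => ?_
  rw [det_succ_row_zero]
  exact Finset.dvd_sum fun c _ =>
    (minorGCD_dvd_det_submatrix A (f ∘ Fin.succ) (g ∘ c.succAbove)).mul_left _

theorem map_minorGCD_dvd_det_mul_mul {S : Type*} [CommRing S] (φ : R →+* S) (A : Matrix m n R)
    {k : ℕ} (U : Matrix (Fin k) m S) (V : Matrix n (Fin k) S) :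
    φ (minorGCD A k) ∣ (U * A.map φ * V).det := by
  rw [det_mul_mul_eq_sum_sum]
  refine Finset.dvd_sum fun f _ => Finset.dvd_sum fun g _ => Dvd.dvd.mul_left ?_ _
  have h : ((A.map φ).submatrix f g).det = φ (A.submatrix f g).det := (φ.map_det _).symm
  rw [h]
  exact map_dvd φ (minorGCD_dvd_det_submatrix A f g)

end MinorGCD

section LogConcavity

/-- `A` multiplied on the left by the monomials `X ^ u a i` and on the right by the monomials
`X ^ v a j`. For suitable exponents, distinct minors of `A` contribute to distinct coefficients of
its determinant; a single variable is used, rather than independent ones, because contents are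
available for univariate polynomials. -/
noncomputable def monomialTwist {R ι m n : Type*} [CommRing R] [Fintype m] [Fintype n]
    (A : Matrix m n R) (u : ι → m → ℕ) (v : ι → n → ℕ) : Matrix ι ι R[X] :=
  (.of fun a i => X ^ u a i : Matrix ι m R[X]) * A.map C *
    (.of fun j a => X ^ v a j : Matrix n ι R[X])

/-- The exponent of the monomial that `monomialTwist` attaches to the minor with rows `p.1` and
columns `p.2`. -/
def minorExponent {ι m n : Type*} [Fintype ι] (u : ι → m → ℕ) (v : ι → n → ℕ)
    (p : (ι → m) × (ι → n)) : ℕ :=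
  ∑ a, u a (p.1 a) + ∑ a, v a (p.2 a)

theorem exists_injective_minorExponent (m n : Type*) [Finite m] [Finite n] (N : ℕ) :
    ∃ (u : ℕ → m → ℕ) (v : ℕ → n → ℕ), ∀ k ≤ N,
      Function.Injective (minorExponent (fun a : Fin k => u a) (fun a : Fin k => v a)) := by
  let em := Finite.equivFin m
  let en := Finite.equivFin n
  -- Row functions are coded in base `card m` below `B`, column functions by multiples of `B`.
  let B := (Nat.card m + 1) ^ N
  let u (a : ℕ) (i : m) : ℕ := em i * Nat.card m ^ a
  let v (a : ℕ) (j : n) : ℕ := B * (en j * Nat.card n ^ a)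
  refine ⟨u, v, fun k hk => ?_⟩
  let rowCode (f : Fin k → m) : ℕ := finFunctionFinEquiv (em ∘ f)
  let colCode (g : Fin k → n) : ℕ := finFunctionFinEquiv (en ∘ g)
  have exponent_eq (f : Fin k → m) (g : Fin k → n) :
      minorExponent (fun a : Fin k => u a) (fun a : Fin k => v a) (f, g) =
        rowCode f + B * colCode g := by
    simp only [minorExponent, u, v, rowCode, colCode, finFunctionFinEquiv_apply,
      Function.comp_apply, Finset.mul_sum]
  have rowCode_lt (f : Fin k → m) : rowCode f < B :=
    (finFunctionFinEquiv (em ∘ f)).2.trans_le <|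
      (Nat.pow_le_pow_left (Nat.le_succ _) k).trans (Nat.pow_le_pow_right (Nat.succ_pos _) hk)
  have B_pos : 0 < B := Nat.pow_pos (Nat.succ_pos _)
  rintro ⟨f, g⟩ ⟨f', g'⟩ h
  simp only [exponent_eq] at h
  have row_eq : rowCode f = rowCode f' := by
    simpa only [Nat.add_mul_mod_self_left, Nat.mod_eq_of_lt (rowCode_lt _)] using
      congrArg (· % B) h
  have col_eq : colCode g = colCode g' := by
    simpa only [Nat.add_mul_div_left _ _ B_pos, Nat.div_eq_of_lt (rowCode_lt _), zero_add] using
      congrArg (· / B) h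
  exact Prod.ext (em.injective.comp_left (finFunctionFinEquiv.injective (Fin.ext row_eq)))
    (en.injective.comp_left (finFunctionFinEquiv.injective (Fin.ext col_eq)))

theorem det_monomialTwist {R ι m n : Type*} [CommRing R] [Fintype ι] [DecidableEq ι] [Fintype m]
    [Fintype n] (A : Matrix m n R) (u : ι → m → ℕ) (v : ι → n → ℕ) :
    (monomialTwist A u v).det =
      ∑ p : (ι → m) × (ι → n), monomial (minorExponent u v p) (A.submatrix p.1 p.2).det := by
  rw [monomialTwist, det_mul_mul_eq_sum_sum, Fintype.sum_prod_type]
  refine Finset.sum_congr rfl fun f _ => Finset.sum_congr rfl fun g _ => ?_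
  have minor_map : ((A.map C).submatrix f g).det = C (A.submatrix f g).det := (C.map_det _).symm
  simp only [of_apply, Finset.prod_pow_eq_pow_sum, minor_map, ← pow_add]
  rw [X_pow_mul_C, C_mul_X_pow_eq_monomial, minorExponent]

theorem coeff_det_monomialTwist {R ι m n : Type*} [CommRing R] [Fintype ι] [DecidableEq ι]
    [Fintype m] [Fintype n] (A : Matrix m n R) {u : ι → m → ℕ} {v : ι → n → ℕ}
    (huv : Function.Injective (minorExponent u v)) (p : (ι → m) × (ι → n)) :
    (monomialTwist A u v).det.coeff (minorExponent u v p) = (A.submatrix p.1 p.2).det := by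
  classical
  simp only [det_monomialTwist, finsetSum_coeff, coeff_monomial, huv.eq_iff, Finset.sum_ite_eq',
    Finset.mem_univ, if_true]

variable {R m n : Type*} [CommRing R] [NormalizedGCDMonoid R] [Fintype m] [Fintype n]

theorem content_det_monomialTwist_dvd_minorGCD (A : Matrix m n R) {k : ℕ} {u : Fin k → m → ℕ}
    {v : Fin k → n → ℕ} (huv : Function.Injective (minorExponent u v)) :
    (monomialTwist A u v).det.content ∣ minorGCD A k :=
  dvd_minorGCD fun f g => coeff_det_monomialTwist A huv (f, g) ▸ content_dvd_coeff _

theorem minorGCD_sq_dvd [IsDomain R] (A : Matrix m n R) (s : ℕ) :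
    minorGCD A (s + 1) ^ 2 ∣ minorGCD A (s + 2) * minorGCD A s := by
  obtain ⟨u, v, huv⟩ := exists_injective_minorExponent m n (s + 2)
  let T (k : ℕ) : Matrix (Fin k) (Fin k) R[X] :=
    monomialTwist A (fun a : Fin k => u a) (fun a : Fin k => v a)
  have jacobi : C (minorGCD A (s + 1)) ^ 2 ∣ (T (s + 2)).det * (T s).det :=
    sq_dvd_det_mul_det_submatrix_castAdd (T (s + 2)) fun p q =>
      map_minorGCD_dvd_det_mul_mul C A (.of fun a i => X ^ u (p a) i) (.of fun j a => X ^ v (q a) j)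
  rw [← C_pow, ← dvd_content_iff_C_dvd] at jacobi
  calc minorGCD A (s + 1) ^ 2
    _ ∣ ((T (s + 2)).det * (T s).det).content := jacobi
    _ ∣ (T (s + 2)).det.content * (T s).det.content := (associated_content_mul _ _).dvd
    _ ∣ minorGCD A (s + 2) * minorGCD A s :=
      mul_dvd_mul (content_det_monomialTwist_dvd_minorGCD A (huv _ le_rfl))
        (content_det_monomialTwist_dvd_minorGCD A (huv _ (Nat.le_add_right s 2)))

end LogConcavity

section DeltaGCD

variable {R : Type*} [CommRing R] [IsDomain R] [NormalizedGCDMonoid R] {b b' : ℕ}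

theorem deltaGCD_eq_minorGCD (A : Matrix (Fin b) (Fin b') R) (j : ℕ) :
    deltaGCD A j = minorGCD A (b - j) :=
  rfl

theorem deltaGCD_eq_one_of_le (A : Matrix (Fin b) (Fin b') R) {j : ℕ} (hj : b ≤ j) :
    deltaGCD A j = 1 := by
  rw [deltaGCD_eq_minorGCD, Nat.sub_eq_zero_of_le hj, minorGCD_zero]

theorem deltaGCD_dvd_of_le (A : Matrix (Fin b) (Fin b') R) {i j : ℕ} (hij : i ≤ j) :
    deltaGCD A j ∣ deltaGCD A i := by
  rw [deltaGCD_eq_minorGCD, deltaGCD_eq_minorGCD]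
  exact Nat.le_induction (dvd_refl _) (fun k _ ih => ih.trans (minorGCD_dvd_minorGCD_succ A k)) _
    (Nat.sub_le_sub_left hij b)

theorem deltaGCD_sq_dvd (A : Matrix (Fin b) (Fin b') R) (j : ℕ) :
    deltaGCD A (j + 1) ^ 2 ∣ deltaGCD A j * deltaGCD A (j + 2) := by
  by_cases hj : j + 2 ≤ b
  · obtain ⟨s, rfl⟩ := Nat.exists_eq_add_of_le hj
    have h := minorGCD_sq_dvd A s
    rwa [show s + 2 = j + 2 + s - j by lia, show s + 1 = j + 2 + s - (j + 1) by lia,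
      show minorGCD A s = minorGCD A (j + 2 + s - (j + 2)) by rw [Nat.add_sub_cancel_left]] at h
  · rw [deltaGCD_eq_one_of_le A (j := j + 1) (by lia), one_pow]
    exact one_dvd _

theorem quotient_dvd_quotient_of_deltaGCD (A : Matrix (Fin b) (Fin b') R) {j : ℕ}
    (h1 : deltaGCD A (j + 1) ≠ 0) {x y : R} (hx : deltaGCD A j = x * deltaGCD A (j + 1))
    (hy : deltaGCD A (j + 1) = y * deltaGCD A (j + 2)) : y ∣ x := by
  have h2 : deltaGCD A (j + 2) ≠ 0 := right_ne_zero_of_mul (hy ▸ h1)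
  refine (mul_dvd_mul_iff_right (mul_ne_zero h1 h2)).1 ?_
  calc y * (deltaGCD A (j + 1) * deltaGCD A (j + 2))
    _ = deltaGCD A (j + 1) ^ 2 := by rw [pow_two]; nth_rw 3 [hy]; ring
    _ ∣ deltaGCD A j * deltaGCD A (j + 2) := deltaGCD_sq_dvd A j
    _ = x * (deltaGCD A (j + 1) * deltaGCD A (j + 2)) := by rw [hx, mul_assoc]

theorem deltaGCD_ne_zero_of_torsion {M : Type*} [AddCommGroup M] [Module R M]
    (htors : ∀ x : M, ∃ f : R, f ≠ 0 ∧ f • x = 0) (D : Matrix (Fin b) (Fin b') R)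
    (g : (Fin b → R) →ₗ[R] M) (hker : LinearMap.ker g ≤ LinearMap.range (Matrix.toLin' D))
    (j : ℕ) : deltaGCD D j ≠ 0 := by
  have multiple_mem_range (i : Fin b) : ∃ f : R, f ≠ 0 ∧ ∃ v, D *ᵥ v = Pi.single i f := by
    obtain ⟨f, hf, hfx⟩ := htors (g (Pi.single i 1))
    have hmem : Pi.single i f ∈ LinearMap.ker g := by
      rw [← mul_one f, ← smul_eq_mul, Pi.single_smul, LinearMap.mem_ker, map_smul, hfx]
    exact ⟨f, hf, hker hmem⟩
  choose f hf v hv using multiple_mem_range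
  have mul_eq_diagonal : (1 : Matrix (Fin b) (Fin b) R) * D.map (RingHom.id R) *
      (.of v : Matrix (Fin b) (Fin b') R)ᵀ = diagonal f := by
    ext i j
    calc _ = (D *ᵥ v j) i := by rw [Matrix.one_mul]; rfl
      _ = diagonal f i j := by
        rw [hv j]
        rcases eq_or_ne i j with rfl | h
        · rw [Pi.single_eq_same, diagonal_apply_eq]
        · rw [Pi.single_eq_of_ne h, diagonal_apply_ne _ h]
  have prod_ne_zero : ∏ i, f i ≠ 0 := Finset.prod_ne_zero_iff.2 fun i _ => hf i
  rw [← det_diagonal, ← mul_eq_diagonal] at prod_ne_zero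
  have maximal_dvd := map_minorGCD_dvd_det_mul_mul (RingHom.id R) D 1 (.of v : Matrix _ _ R)ᵀ
  exact ne_zero_of_dvd_ne_zero prod_ne_zero ((deltaGCD_dvd_of_le D j.zero_le).trans maximal_dvd)

end DeltaGCD

section Diagonal

theorem prod_dvd_prod_of_card_le {ι M : Type*} [DecidableEq ι] [CommMonoid M] {s t : Finset ι}
    {f : ι → M} (hcard : s.card ≤ t.card) (hf : ∀ i ∈ s, ∀ j ∈ t \ s, f i ∣ f j) :
    ∏ i ∈ s, f i ∣ ∏ j ∈ t, f j := by
  obtain ⟨w, hw, hwcard⟩ :=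
    Finset.exists_subset_card_eq (Finset.card_sdiff_le_card_sdiff_iff.2 hcard)
  let e := Finset.equivOfCardEq hwcard.symm
  have sdiff_dvd : ∏ i ∈ s \ t, f i ∣ ∏ j ∈ t \ s, f j := by
    refine dvd_trans ?_ (Finset.prod_dvd_prod_of_subset w _ f hw)
    rw [← Finset.prod_coe_sort, ← Finset.prod_coe_sort w, ← e.prod_comp]
    exact Finset.prod_dvd_prod_of_dvd _ _ fun i _ =>
      hf i (Finset.sdiff_subset i.2) (e i) (hw (e i).2)
  rw [← Finset.prod_inter_mul_prod_sdiff s t, ← Finset.prod_inter_mul_prod_sdiff t s,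
    Finset.inter_comm]
  exact mul_dvd_mul_left _ sdiff_dvd

theorem prod_dvd_det_submatrix_diagonal {S ι κ : Type*} [CommRing S] [DecidableEq ι] [Fintype κ]
    [DecidableEq κ] (q : ι → S) (f g : κ → ι) :
    ∏ a, q (f a) ∣ ((diagonal q).submatrix f g).det := by
  have h : (diagonal q).submatrix f g =
      Matrix.of fun a c => q (f a) * (1 : Matrix ι ι S).submatrix f g a c := by
    ext a c
    simp only [submatrix_apply, of_apply, diagonal_apply, one_apply, mul_ite, mul_one, mul_zero]
  rw [h, det_mul_column]
  exact dvd_mul_right _ _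

variable {R : Type*} [CommRing R] [IsDomain R] [NormalizedGCDMonoid R] {n : ℕ}

theorem deltaGCD_diagonal {q : Fin n → R} (hq : ∀ i j, i ≤ j → q j ∣ q i) (j : ℕ) :
    deltaGCD (diagonal q) j = normalize (∏ i with j ≤ (i : Fin n).val, q i) := by
  set t : Finset (Fin n) := {i | j ≤ i.val} with ht
  have tail_card : t.card = n - j := by
    have h := Finset.card_filter_add_card_filter_not (s := Finset.univ) fun i : Fin n => i.val < j
    simp only [not_lt, Fin.card_filter_val_lt, Finset.card_fin] at h
    lia
  refine dvd_antisymm_of_normalize_eq (normalize_minorGCD _ _) (normalize_idem _) ?_ ?_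
  · let e := t.orderEmbOfFin tail_card
    have h := minorGCD_dvd_det_submatrix (diagonal q) e e
    rw [submatrix_diagonal _ _ e.injective, det_diagonal] at h
    rw [dvd_normalize_iff, ← Finset.map_orderEmbOfFin_univ t tail_card, Finset.prod_map]
    exact h
  · refine normalize_dvd_iff.2 <| dvd_minorGCD fun f g => ?_
    refine dvd_trans ?_ (prod_dvd_det_submatrix_diagonal q f g)
    rw [← Finset.prod_map Finset.univ f q]
    refine prod_dvd_prod_of_card_le ?_ fun i hi i' hi' => hq i' i ?_
    · rw [Finset.card_map, Finset.card_fin]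
      exact tail_card.le
    · simp only [ht, Finset.mem_sdiff, Finset.mem_filter_univ, not_le] at hi hi'
      exact (hi'.2.trans_le hi).le

end Diagonal

section Quotients

variable {R : Type*} [CommRing R] [IsDomain R] [NormalizedGCDMonoid R] {b b' n : ℕ}
  {D : Matrix (Fin b) (Fin b') R} {q : Fin n → R}

theorem quotient_dvd_quotient_of_le (h1 : deltaGCD D 1 ≠ 0)
    (hq : ∀ j : Fin n, deltaGCD D j = q j * deltaGCD D (j + 1)) (i j : Fin n) (hij : i ≤ j) :
    q j ∣ q i := by
  suffices ∀ k (hk : k < n), i.val ≤ k → q ⟨k, hk⟩ ∣ q i from this j j.isLt hij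
  intro k hk hik
  induction k, hik using Nat.le_induction with
  | base => rfl
  | succ k _ ih =>
    have hne : deltaGCD D (k + 1) ≠ 0 :=
      ne_zero_of_dvd_ne_zero h1 (deltaGCD_dvd_of_le D (Nat.le_add_left 1 k))
    have hk' : k < n := k.lt_succ_self.trans hk
    exact (quotient_dvd_quotient_of_deltaGCD D hne (hq ⟨k, hk'⟩) (hq ⟨k + 1, hk⟩)).trans (ih hk')

theorem deltaGCD_eq_prod_quotients (hn : deltaGCD D n = 1)
    (hq : ∀ j : Fin n, deltaGCD D j = q j * deltaGCD D (j + 1)) (j : ℕ) :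
    deltaGCD D j = ∏ i with j ≤ (i : Fin n).val, q i := by
  rcases le_total n j with hj | hj
  · have h1 : deltaGCD D j = 1 := by
      rw [deltaGCD_eq_minorGCD, ← normalize_minorGCD]
      exact normalize_eq_one.2 (isUnit_of_dvd_one (hn ▸ deltaGCD_dvd_of_le D hj))
    rw [h1, Finset.filter_false_of_mem fun i _ => not_le.2 (i.isLt.trans_le hj), Finset.prod_empty]
  · induction hj using Nat.decreasingInduction with
    | self =>
      rw [hn, Finset.filter_false_of_mem fun i _ => not_le.2 i.isLt, Finset.prod_empty]
    | of_succ j hj ih =>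
      have tail_eq : ({i | j ≤ i.val} : Finset (Fin n)) =
          insert ⟨j, hj⟩ ({i | j + 1 ≤ i.val} : Finset (Fin n)) := by
        ext i
        simp only [Finset.mem_filter_univ, Finset.mem_insert, Fin.ext_iff]
        lia
      rw [tail_eq, Finset.prod_insert (by simp), ← ih, ← hq ⟨j, hj⟩]

theorem deltaGCD_cyclic_decomposition_general (h1 : deltaGCD D 1 ≠ 0) (hn : deltaGCD D n = 1)
    (hq : ∀ j : Fin n, deltaGCD D j = q j * deltaGCD D (j + 1)) (j : ℕ) :
    deltaGCD (diagonal q) j = deltaGCD D j := by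
  rw [deltaGCD_diagonal (quotient_dvd_quotient_of_le h1 hq), ← deltaGCD_eq_prod_quotients hn hq,
    deltaGCD_eq_minorGCD, normalize_minorGCD]

end Quotients

/-- let `M` be a finitely generated torsion module over the GCD
domain `R` (standing for `ℤ[t,t⁻¹]`), presented by `R^{b'} --D--> R^b → M → 0`,
with `Δ^j(M) = 1` for `j > k` and `q j = Δ^j(M)/Δ^{j+1}(M)` the successive
quotients.  Then the module `M' = ⊕_{j=0}^k R/(q j)`, presented by the diagonal
matrix `diag(q 0, …, q k)`, has the same invariants: `Δ^j(M') = Δ^j(M)` for all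
`j ≥ 0`. -/
theorem deltaGCD_cyclic_decomposition {R : Type*} [CommRing R] [IsDomain R]
    [NormalizedGCDMonoid R] {M : Type*} [AddCommGroup M] [Module R M]
    (htors : ∀ x : M, ∃ f : R, f ≠ 0 ∧ f • x = 0)
    (b b' : ℕ) (D : Matrix (Fin b) (Fin b') R)
    (g : (Fin b → R) →ₗ[R] M) (hg : Function.Surjective g)
    (hexact : LinearMap.ker g = LinearMap.range (Matrix.toLin' D))
    (k : ℕ) (hk : ∀ j : ℕ, k < j → deltaGCD D j = 1)
    (q : Fin (k + 1) → R)
    (hq : ∀ j : Fin (k + 1), deltaGCD D (j : ℕ) = q j * deltaGCD D ((j : ℕ) + 1)) :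
    ∀ j : ℕ, deltaGCD (Matrix.diagonal q) j = deltaGCD D j := by
  exact deltaGCD_cyclic_decomposition_general (deltaGCD_ne_zero_of_torsion htors D g hexact.le 1)
    (hk (k + 1) k.lt_succ_self) hq
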